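/- Gelfand–Pinsker single-letterization (rate converse step). Let M, K and the sequences S^n = (S_1,…,S_n), X^n = (X_1,…,X_n) be finitely-valued random variables such that S^n is i.i.d. (each S_i has common pmf P_S) and S^n is independent of the pair (M, K). For i = 1,…,n define U_i = (M, K, S_{i+1:n}, X_{1:i−1}). Then I(M ; X^n | K) ≤ Σ_{i=1}^n [ I(U_i ; X_i) − I(U_i ; S_i) ]. -/

import Mathlib

open Finset Filter Real

noncomputable section

open scoped Classical

/-- Pushforward of a mass function along a map. -/
def pushf {α β : Type*} [Fintype α] (p : α → ℝ) (f : α → β) : β → ℝ :=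
  fun b => ∑ a, if f a = b then p a else 0

/-- Shannon entropy (in bits) of a mass function on a finite type,
with the convention `0 * logb 2 0 = 0`. -/
def ent {α : Type*} [Fintype α] (p : α → ℝ) : ℝ := -∑ a, p a * Real.logb 2 (p a)

/-- Shannon entropy (in bits) of a random variable `f` under the mass function `p`. -/
def entRV {α β : Type*} [Fintype α] [Fintype β] (p : α → ℝ) (f : α → β) : ℝ :=
  ent (pushf p f)

/-- Mutual information `I(f; g)` (in bits) under the mass function `p`. -/
def mi {α β γ : Type*} [Fintype α] [Fintype β] [Fintype γ]
    (p : α → ℝ) (f : α → β) (g : α → γ) : ℝ :=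
  entRV p f + entRV p g - entRV p (fun a => (f a, g a))

/-- Conditional mutual information `I(f; g | h)` (in bits) under the mass function `p`. -/
def cmi {α β γ δ : Type*} [Fintype α] [Fintype β] [Fintype γ] [Fintype δ]
    (p : α → ℝ) (f : α → β) (g : α → γ) (h : α → δ) : ℝ :=
  entRV p (fun a => (f a, h a)) + entRV p (fun a => (g a, h a))
    - entRV p (fun a => (f a, g a, h a)) - entRV p h

/-- Conditional entropy `H(f | g)` (in bits) under the mass function `p`. -/
def condEnt {α β γ : Type*} [Fintype α] [Fintype β] [Fintype γ]
    (p : α → ℝ) (f : α → β) (g : α → γ) : ℝ :=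
  entRV p (fun a => (f a, g a)) - entRV p g

/-- Total variation distance between two mass functions on a finite type. -/
def TV {α : Type*} [Fintype α] (p q : α → ℝ) : ℝ := (∑ a, |p a - q a|) / 2

/-- The binary entropy function (in bits), with `h2 0 = h2 1 = 0`. -/
def h2 (t : ℝ) : ℝ := -(t * Real.logb 2 t) - (1 - t) * Real.logb 2 (1 - t)

/-!
Gibbs' inequality, applied to a product mass function, gives both entropy inputs of the proof:
`H(Xⁿ, K) ≤ ∑ H(Xᵢ) + H(K)` for arbitrary letters, with equality when the letters are independent
of each other and of the side variable, as for `(Sⁿ, (M, K))`.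

Write `C = (M, K)`. The pair `(Uᵢ, Xᵢ)` carries the information `(C, S_{i+1:n}, X_{1:i})` and
`(Uᵢ, Sᵢ)` carries `(C, S_{i:n}, X_{1:i-1})`, which is the former with `i - 1` in place of `i`.
Hence `∑ (H(Uᵢ, Sᵢ) - H(Uᵢ, Xᵢ))` telescopes to `H(C, Sⁿ) - H(C, Xⁿ)`.
-/

section Pushforward

variable {Ω β γ : Type*} [Fintype Ω]

lemma pushf_nonneg {p : Ω → ℝ} (hp : ∀ ω, 0 ≤ p ω) (f : Ω → β) (b : β) : 0 ≤ pushf p f b :=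
  Finset.sum_nonneg fun ω _ => by split_ifs <;> simp [hp ω]

lemma le_pushf_apply {p : Ω → ℝ} (hp : ∀ ω, 0 ≤ p ω) (f : Ω → β) (ω : Ω) :
    p ω ≤ pushf p f (f ω) := by
  have hterm : ∀ ω' ∈ Finset.univ, 0 ≤ if f ω' = f ω then p ω' else 0 := fun ω' _ => by
    split_ifs <;> simp [hp ω']
  simpa only [pushf, if_true] using Finset.single_le_sum hterm (Finset.mem_univ ω)

lemma pushf_apply_ne_zero {p : Ω → ℝ} (hp : ∀ ω, 0 ≤ p ω) (f : Ω → β) {ω : Ω} (hω : p ω ≠ 0) :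
    pushf p f (f ω) ≠ 0 :=
  (((hp ω).lt_of_ne' hω).trans_le (le_pushf_apply hp f ω)).ne'

lemma pushf_apply_congr (p : Ω → ℝ) {f : Ω → β} {g : Ω → γ}
    (hfg : ∀ ω ω', f ω = f ω' ↔ g ω = g ω') (ω : Ω) : pushf p f (f ω) = pushf p g (g ω) := by
  simp only [pushf, hfg]

lemma sum_pushf_mul [Fintype β] (p : Ω → ℝ) (f : Ω → β) (φ : β → ℝ) :
    ∑ b, pushf p f b * φ b = ∑ ω, p ω * φ (f ω) := by
  simp only [pushf, Finset.sum_mul, ite_mul, zero_mul]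
  rw [Finset.sum_comm]
  simp only [Finset.sum_ite_eq, Finset.mem_univ, if_true]

lemma sum_pushf [Fintype β] (p : Ω → ℝ) (f : Ω → β) : ∑ b, pushf p f b = ∑ ω, p ω := by
  simpa only [mul_one] using sum_pushf_mul p f fun _ => 1

end Pushforward

section CrossEntropy

variable {Ω β γ δ : Type*} [Fintype Ω]

/-- Cross entropy (in bits) `-𝔼[log₂ q(f)]` of the random variable `f` under the mass function `p`
relative to a mass function `q` on its values. Since `Real.logb 2 0 = 0`, it is meaningful only when
`q (f ω) ≠ 0` wherever `p ω ≠ 0`. -/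
def crossEnt (p : Ω → ℝ) (f : Ω → β) (q : β → ℝ) : ℝ := -∑ ω, p ω * Real.logb 2 (q (f ω))

lemma entRV_eq_crossEnt_pushf [Fintype β] (p : Ω → ℝ) (f : Ω → β) :
    entRV p f = crossEnt p f (pushf p f) :=
  congrArg Neg.neg (sum_pushf_mul p f fun b => Real.logb 2 (pushf p f b))

lemma entRV_congr [Fintype β] [Fintype γ] (p : Ω → ℝ) {f : Ω → β} {g : Ω → γ}
    (hfg : ∀ ω ω', f ω = f ω' ↔ g ω = g ω') : entRV p f = entRV p g := by
  simp only [entRV_eq_crossEnt_pushf, crossEnt, pushf_apply_congr p hfg]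

lemma mi_congr_left [Fintype β] [Fintype γ] [Fintype δ] (p : Ω → ℝ) {f : Ω → β} {f' : Ω → γ}
    (hff' : ∀ ω ω', f ω = f ω' ↔ f' ω = f' ω') (g : Ω → δ) : mi p f g = mi p f' g := by
  have hpair : entRV p (fun ω => (f ω, g ω)) = entRV p (fun ω => (f' ω, g ω)) :=
    entRV_congr p fun ω ω' => by simp only [Prod.mk.injEq, hff']
  rw [mi, mi, entRV_congr p hff', hpair]

lemma mul_log_sub_log_le {x y : ℝ} (hx : 0 ≤ x) (hy : 0 ≤ y) (hxy : y = 0 → x = 0) :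
    x * (Real.log y - Real.log x) ≤ y - x := by
  rcases hx.eq_or_lt with rfl | hx
  · simpa using hy
  have hy : 0 < y := hy.lt_of_ne' fun h => hx.ne' (hxy h)
  calc x * (Real.log y - Real.log x) = x * Real.log (y / x) := by
        rw [Real.log_div hy.ne' hx.ne']
    _ ≤ x * (y / x - 1) :=
        mul_le_mul_of_nonneg_left (Real.log_le_sub_one_of_pos (div_pos hy hx)) hx.le
    _ = y - x := by field_simp

lemma ent_le_neg_sum_mul_logb [Fintype β] {r q : β → ℝ} (hr : ∀ b, 0 ≤ r b) (hq : ∀ b, 0 ≤ q b)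
    (hsum : ∑ b, q b ≤ ∑ b, r b) (hac : ∀ b, q b = 0 → r b = 0) :
    ent r ≤ -∑ b, r b * Real.logb 2 (q b) := by
  have hnat : ∑ b, r b * (Real.log (q b) - Real.log (r b)) ≤ 0 := by
    calc ∑ b, r b * (Real.log (q b) - Real.log (r b)) ≤ ∑ b, (q b - r b) :=
          Finset.sum_le_sum fun b _ => mul_log_sub_log_le (hr b) (hq b) (hac b)
      _ ≤ 0 := by rw [Finset.sum_sub_distrib]; linarith
  have hbits : ∑ b, r b * Real.logb 2 (q b) - ∑ b, r b * Real.logb 2 (r b)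
      = (∑ b, r b * (Real.log (q b) - Real.log (r b))) / Real.log 2 := by
    rw [← Finset.sum_sub_distrib, Finset.sum_div]
    exact Finset.sum_congr rfl fun b _ => by simp only [Real.logb]; ring
  have := div_nonpos_of_nonpos_of_nonneg hnat (Real.log_nonneg one_le_two)
  rw [ent]
  linarith

theorem entRV_le_crossEnt [Fintype β] {p : Ω → ℝ} (hp : ∀ ω, 0 ≤ p ω) (f : Ω → β) {q : β → ℝ}
    (hq : ∀ b, 0 ≤ q b) (hsum : ∑ b, q b ≤ ∑ ω, p ω) (hac : ∀ ω, p ω ≠ 0 → q (f ω) ≠ 0) :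
    entRV p f ≤ crossEnt p f q := by
  rw [crossEnt, ← sum_pushf_mul p f fun b => Real.logb 2 (q b)]
  refine ent_le_neg_sum_mul_logb (pushf_nonneg hp f) hq (hsum.trans_eq (sum_pushf p f).symm) ?_
  refine fun b hb => Finset.sum_eq_zero fun ω _ => ?_
  split_ifs with hω
  · by_contra hpω
    exact hac ω hpω (hω ▸ hb)
  · rfl

end CrossEntropy

section Sequences

variable {Ω ι γ : Type*} {α : ι → Type*} [Fintype Ω] [Fintype ι]

lemma crossEnt_prod_mul (p : Ω → ℝ) (X : Ω → ∀ i, α i) (g : Ω → γ) (q : ∀ i, α i → ℝ) (r : γ → ℝ)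
    (hne : ∀ ω, p ω ≠ 0 → (∏ i, q i (X ω i)) * r (g ω) ≠ 0) :
    crossEnt p (fun ω => (X ω, g ω)) (fun y => (∏ i, q i (y.1 i)) * r y.2)
      = ∑ i, crossEnt p (fun ω => X ω i) (q i) + crossEnt p g r := by
  have hlog : ∀ ω, p ω * Real.logb 2 ((∏ i, q i (X ω i)) * r (g ω))
      = ∑ i, p ω * Real.logb 2 (q i (X ω i)) + p ω * Real.logb 2 (r (g ω)) := by
    intro ω
    by_cases hω : p ω = 0
    · simp only [hω, zero_mul, Finset.sum_const_zero, add_zero]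
    · obtain ⟨hprod, hr⟩ := mul_ne_zero_iff.mp (hne ω hω)
      rw [Real.logb_mul hprod hr, Real.logb_prod _ _ (Finset.prod_ne_zero_iff.mp hprod), mul_add,
        Finset.mul_sum]
  simp only [crossEnt, hlog]
  rw [Finset.sum_add_distrib, Finset.sum_comm, neg_add, Finset.sum_neg_distrib]

variable [DecidableEq ι] [∀ i, Fintype (α i)] [Fintype γ]

theorem entRV_pi_prod_le {p : Ω → ℝ} (hp : ∀ ω, 0 ≤ p ω) (hp1 : ∑ ω, p ω = 1)
    (X : Ω → ∀ i, α i) (g : Ω → γ) :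
    entRV p (fun ω => (X ω, g ω)) ≤ ∑ i, entRV p (fun ω => X ω i) + entRV p g := by
  set F : ∀ i, α i → ℝ := fun i => pushf p fun ω => X ω i
  have hne : ∀ ω, p ω ≠ 0 → (∏ i, F i (X ω i)) * pushf p g (g ω) ≠ 0 := fun ω hω =>
    mul_ne_zero (Finset.prod_ne_zero_iff.mpr fun i _ => pushf_apply_ne_zero hp (X · i) hω)
      (pushf_apply_ne_zero hp g hω)
  have hmass : ∑ y : (∀ i, α i) × γ, (∏ i, F i (y.1 i)) * pushf p g y.2 = 1 := by
    simp only [Fintype.sum_prod_type, ← Finset.mul_sum, ← Finset.sum_mul, ← Fintype.prod_sum]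
    simp only [F, sum_pushf, hp1, Finset.prod_const_one, mul_one]
  calc entRV p (fun ω => (X ω, g ω))
      ≤ crossEnt p (fun ω => (X ω, g ω)) (fun y => (∏ i, F i (y.1 i)) * pushf p g y.2) :=
        entRV_le_crossEnt hp _
          (fun y => mul_nonneg (Finset.prod_nonneg fun i _ => pushf_nonneg hp _ _)
            (pushf_nonneg hp g _))
          (hmass.trans hp1.symm).le hne
    _ = ∑ i, entRV p (fun ω => X ω i) + entRV p g := by
        simp only [crossEnt_prod_mul p X g F _ hne, entRV_eq_crossEnt_pushf, F]

theorem entRV_pi_prod_eq_of_indep {p : Ω → ℝ} (hp : ∀ ω, 0 ≤ p ω) (hp1 : ∑ ω, p ω = 1)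
    (S : Ω → ∀ i, α i) (g : Ω → γ) {q : ∀ i, α i → ℝ} (hq : ∀ i x, 0 ≤ q i x)
    (hq1 : ∀ i, ∑ x, q i x = 1)
    (hindep : ∀ s c, pushf p (fun ω => (S ω, g ω)) (s, c) = (∏ i, q i (s i)) * pushf p g c) :
    entRV p (fun ω => (S ω, g ω)) = ∑ i, entRV p (fun ω => S ω i) + entRV p g := by
  refine (entRV_pi_prod_le hp hp1 S g).antisymm ?_
  have hlaw : pushf p (fun ω => (S ω, g ω)) = fun y => (∏ i, q i (y.1 i)) * pushf p g y.2 :=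
    funext fun y => hindep y.1 y.2
  have hne : ∀ ω, p ω ≠ 0 → (∏ i, q i (S ω i)) * pushf p g (g ω) ≠ 0 := fun ω hω =>
    hindep (S ω) (g ω) ▸ pushf_apply_ne_zero hp (fun ω => (S ω, g ω)) hω
  have hletter : ∀ i, entRV p (fun ω => S ω i) ≤ crossEnt p (fun ω => S ω i) (q i) := fun i =>
    entRV_le_crossEnt hp _ (hq i) ((hq1 i).trans hp1.symm).le fun ω hω =>
      Finset.prod_ne_zero_iff.mp (left_ne_zero_of_mul (hne ω hω)) i (Finset.mem_univ i)
  calc ∑ i, entRV p (fun ω => S ω i) + entRV p g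
      ≤ ∑ i, crossEnt p (fun ω => S ω i) (q i) + crossEnt p g (pushf p g) :=
        add_le_add (Finset.sum_le_sum fun i _ => hletter i) (entRV_eq_crossEnt_pushf p g).le
    _ = entRV p (fun ω => (S ω, g ω)) := by
        rw [← crossEnt_prod_mul p S g q _ hne, entRV_eq_crossEnt_pushf, hlaw]

end Sequences

section Telescoping

/-- The subsequence of `x` indexed by `A`, encoded as a sequence of full length whose coordinates
outside `A` are `none`, so that its type depends only on `x`. -/
def mask {ι : Type*} {α : ι → Type*} (A : Set ι) [DecidablePred (· ∈ A)] (x : ∀ j, α j) :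
    ∀ j, Option (α j) :=
  fun j => if j ∈ A then some (x j) else none

lemma mask_eq_mask_iff {ι : Type*} {α : ι → Type*} (A : Set ι) [DecidablePred (· ∈ A)]
    {x y : ∀ j, α j} : mask A x = mask A y ↔ ∀ j ∈ A, x j = y j := by
  simp only [mask, funext_iff]
  refine forall_congr' fun j => ?_
  split_ifs with hj <;> simp [hj]

variable {Ω γ : Type*} [Fintype Ω] [Fintype γ] {n : ℕ} {σ ξ : Fin n → Type*}
  [∀ i, Fintype (σ i)] [∀ i, Fintype (ξ i)]

/-- The Gelfand–Pinsker auxiliary variable `(C, S_{i+1:n}, X_{1:i-1})` built on the common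
variable `C`. -/
def auxVar (C : Ω → γ) (S : Ω → ∀ i, σ i) (X : Ω → ∀ i, ξ i) (i : Fin n) (ω : Ω) :
    γ × (∀ j, Option (σ j)) × (∀ j, Option (ξ j)) :=
  (C ω, mask (Set.Ioi i) (S ω), mask (Set.Iio i) (X ω))

/-- The entropy `H(C, S_{k+1:n}, X_{1:k})` of the sequence that follows `X` up to time `k` and `S`
afterwards; as `Fin n` starts at `0`, the index `j` is the time `j + 1`. -/
def hybridEnt (p : Ω → ℝ) (C : Ω → γ) (S : Ω → ∀ i, σ i) (X : Ω → ∀ i, ξ i) (k : ℕ) : ℝ :=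
  entRV p fun ω => (C ω, mask {j : Fin n | k ≤ j} (S ω), mask {j : Fin n | (j : ℕ) < k} (X ω))

variable (p : Ω → ℝ) (C : Ω → γ) (S : Ω → ∀ i, σ i) (X : Ω → ∀ i, ξ i)

lemma hybridEnt_zero : hybridEnt p C S X 0 = entRV p fun ω => (S ω, C ω) := by
  refine entRV_congr p fun ω ω' => ?_
  simp only [Prod.mk.injEq, mask_eq_mask_iff, Set.mem_ofPred_eq]
  grind

lemma hybridEnt_last : hybridEnt p C S X n = entRV p fun ω => (X ω, C ω) := by
  refine entRV_congr p fun ω ω' => ?_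
  simp only [Prod.mk.injEq, mask_eq_mask_iff, Set.mem_ofPred_eq]
  grind

lemma entRV_auxVar_prod_left (i : Fin n) :
    entRV p (fun ω => (auxVar C S X i ω, S ω i)) = hybridEnt p C S X i := by
  refine entRV_congr p fun ω ω' => ?_
  simp only [auxVar, Prod.mk.injEq, mask_eq_mask_iff, Set.mem_ofPred_eq, Set.mem_Ioi, Set.mem_Iio]
  grind

lemma entRV_auxVar_prod_right (i : Fin n) :
    entRV p (fun ω => (auxVar C S X i ω, X ω i)) = hybridEnt p C S X (i + 1) := by
  refine entRV_congr p fun ω ω' => ?_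
  simp only [auxVar, Prod.mk.injEq, mask_eq_mask_iff, Set.mem_ofPred_eq, Set.mem_Ioi, Set.mem_Iio]
  grind

theorem sum_mi_auxVar_sub :
    ∑ i, (mi p (auxVar C S X i) (fun ω => X ω i) - mi p (auxVar C S X i) (fun ω => S ω i))
      = ∑ i, entRV p (fun ω => X ω i) - ∑ i, entRV p (fun ω => S ω i)
        + (entRV p (fun ω => (S ω, C ω)) - entRV p (fun ω => (X ω, C ω))) := by
  have htel : ∑ i : Fin n, (hybridEnt p C S X i - hybridEnt p C S X (i + 1))
      = entRV p (fun ω => (S ω, C ω)) - entRV p (fun ω => (X ω, C ω)) := by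
    rw [Fin.sum_univ_eq_sum_range fun k => hybridEnt p C S X k - hybridEnt p C S X (k + 1),
      Finset.sum_range_sub', hybridEnt_zero, hybridEnt_last]
  rw [← htel, ← Finset.sum_sub_distrib, ← Finset.sum_add_distrib]
  refine Finset.sum_congr rfl fun i _ => ?_
  rw [mi, mi, entRV_auxVar_prod_left, entRV_auxVar_prod_right]
  ring

end Telescoping

theorem gp_single_letterization_general {Ω MT KT : Type*} [Fintype Ω] [Fintype MT] [Fintype KT]
    {n : ℕ} {σ ξ : Fin n → Type*} [∀ i, Fintype (σ i)] [∀ i, Fintype (ξ i)]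
    {p : Ω → ℝ} (hp : ∀ ω, 0 ≤ p ω) (hp1 : ∑ ω, p ω = 1)
    (M : Ω → MT) (K : Ω → KT) (S : Ω → ∀ i, σ i) (X : Ω → ∀ i, ξ i)
    {q : ∀ i, σ i → ℝ} (hq : ∀ i x, 0 ≤ q i x) (hq1 : ∀ i, ∑ x, q i x = 1)
    (hindep : ∀ s mk, pushf p (fun ω => (S ω, M ω, K ω)) (s, mk)
      = (∏ i, q i (s i)) * pushf p (fun ω => (M ω, K ω)) mk) :
    cmi p M X K ≤ ∑ i,
      (mi p (fun ω => (M ω, K ω, mask (Set.Ioi i) (S ω), mask (Set.Iio i) (X ω))) (fun ω => X ω i)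
      - mi p (fun ω => (M ω, K ω, mask (Set.Ioi i) (S ω), mask (Set.Iio i) (X ω)))
          (fun ω => S ω i)) := by
  have hU : ∀ i ω ω', (M ω, K ω, mask (Set.Ioi i) (S ω), mask (Set.Iio i) (X ω))
      = (M ω', K ω', mask (Set.Ioi i) (S ω'), mask (Set.Iio i) (X ω'))
      ↔ auxVar (fun ω => (M ω, K ω)) S X i ω = auxVar (fun ω => (M ω, K ω)) S X i ω' :=
    fun i ω ω' => by simp only [auxVar, Prod.mk.injEq, and_assoc]
  have hMXK : entRV p (fun ω => (M ω, X ω, K ω)) = entRV p (fun ω => (X ω, M ω, K ω)) :=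
    entRV_congr p fun ω ω' => by simp only [Prod.mk.injEq, and_left_comm]
  have hX := entRV_pi_prod_le hp hp1 X K
  have hS := entRV_pi_prod_eq_of_indep hp hp1 S (fun ω => (M ω, K ω)) hq hq1 hindep
  simp only [mi_congr_left p (hU _), sum_mi_auxVar_sub]
  rw [cmi, hMXK]
  linarith

/-- **Gelfand–Pinsker single-letterization (rate converse step).**  Let `M, K, Sⁿ, Xⁿ`
be finitely-valued random variables such that `Sⁿ` is i.i.d. with common pmf `P_S` and
independent of the pair `(M, K)`.  Setting `Uᵢ = (M, K, S_{i+1:n}, X_{1:i−1})`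
(subsequences encoded by masking the complementary coordinates with `none`):
`I(M; Xⁿ | K) ≤ Σᵢ [I(Uᵢ; Xᵢ) − I(Uᵢ; Sᵢ)]`. -/
theorem gp_single_letterization
    {Ω MT KT ST XT : Type*} [Fintype Ω] [Fintype MT] [Fintype KT] [Fintype ST] [Fintype XT]
    (n : ℕ)
    (p : Ω → ℝ) (hp0 : ∀ ω, 0 ≤ p ω) (hp1 : ∑ ω, p ω = 1)
    (fM : Ω → MT) (fK : Ω → KT) (fS : Ω → Fin n → ST) (fX : Ω → Fin n → XT)
    (PS : ST → ℝ) (hPS0 : ∀ s, 0 ≤ PS s) (hPS1 : ∑ s, PS s = 1)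
    -- Sⁿ is i.i.d. with per-letter pmf P_S and independent of (M, K)
    (hiid : ∀ (s : Fin n → ST) (mk : MT × KT),
      pushf p (fun ω => (fS ω, fM ω, fK ω)) (s, mk)
        = (∏ i, PS (s i)) * pushf p (fun ω => (fM ω, fK ω)) mk) :
    cmi p fM fX fK ≤
      ∑ i : Fin n,
        (mi p
          (fun ω => (fM ω, fK ω,
            (fun j : Fin n => if i < j then some (fS ω j) else none),
            (fun j : Fin n => if j < i then some (fX ω j) else none)))
          (fun ω => fX ω i)
        - mi p
          (fun ω => (fM ω, fK ω,
            (fun j : Fin n => if i < j then some (fS ω j) else none),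
            (fun j : Fin n => if j < i then some (fX ω j) else none)))
          (fun ω => fS ω i)) :=
  gp_single_letterization_general hp0 hp1 fM fK fS fX (fun _ => hPS0) (fun _ => hPS1) hiid
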